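/- Let n = 6 and let α_1, …, α_6 ∈ ℝ (indices mod 6) satisfy sin(α_{j+1} − α_j) ≠ 0 for all j, and suppose the opposite sides are parallel: α_{j+3} − α_j is an integer multiple of π for j = 1, 2, 3. Let P_θ be the associated 6×6 perpendicular-bisector evolute matrix. Then P_θ³ = −P_θ. Geometrically: for a hexagon with parallel opposite sides, the third perpendicular-bisector evolute coincides with the first one, i.e. the first and second P-evolutes are each other's evolutes. -/

import Mathlib

open Real

/-- The perpendicular-bisector evolute matrix `P_θ` associated with the cyclic
sequence of normal angles `α`. -/
noncomputable def Pmat (n : ℕ) [NeZero n] (α : Fin n → ℝ) : Matrix (Fin n) (Fin n) ℝ :=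
  Matrix.of fun j k =>
    if k = j then
      (Real.cos (α j - α (j - 1)) / Real.sin (α j - α (j - 1)) -
        Real.cos (α (j + 1) - α j) / Real.sin (α (j + 1) - α j)) / 2
    else if k = j + 1 then 1 / (2 * Real.sin (α (j + 1) - α j))
    else if k = j - 1 then -(1 / (2 * Real.sin (α j - α (j - 1))))
    else 0

/-!
Write `θ j = α (j + 1) - α j`. On sequences of support numbers `P_θ` acts by
`(P v) j = (c (j - 1) - c j) v j + s j v (j + 1) - s (j - 1) v (j - 1)` with `c = cot θ / 2` and
`s = 1 / (2 sin θ)`. If opposite sides are parallel, `c` has period three and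
`θ j + θ (j + 1) + θ (j + 2)` is a multiple of `π`, so that
`c j c (j + 1) + c (j + 1) c (j + 2) + c (j + 2) c j = 1 / 4`. Together with `s ^ 2 = 1 / 4 + c ^ 2`
this makes all terms of `P³ v + P v` cancel except those in `v (j + 3)` and `v (j - 3)`. Six steps
around a hexagon or a triangle lead back to the start, so these two are the same entry of `v`, and
their coefficients are opposite because `s j s (j + 1) s (j + 2)` has period three.
-/

open scoped Fin.CommRing Matrix

section EvoluteOp

variable {ι R : Type*} [AddCommGroupWithOne ι] [CommRing R]

/-- The operator `P_θ` on sequences, with arbitrary coefficients `c` and `s` in place of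
`cot θ / 2` and `1 / (2 sin θ)`. The paper's half-integer index `j + 1/2` is written `j`. -/
def evoluteOp (c s v : ι → R) (j : ι) : R :=
  (c (j - 1) - c j) * v j + s j * v (j + 1) - s (j - 1) * v (j - 1)

theorem evoluteOp_iterate_three {c s : ι → R} {κ : R} (hc : ∀ j, c (j + 3) = c j)
    (hs : ∀ j, s j ^ 2 = κ + c j ^ 2)
    (hcc : ∀ j, c j * c (j + 1) + c (j + 1) * c (j + 2) + c (j + 2) * c j = κ) (v : ι → R) (j : ι) :
    (evoluteOp c s)^[3] v j = -(4 * κ) * evoluteOp c s v j +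
      s j * s (j + 1) * s (j + 2) * v (j + 3) -
      s (j - 1) * s (j - 2) * s (j - 3) * v (j - 3) := by
  have add_two (i : ι) : i + 1 + 1 = i + 2 := by rw [add_assoc, one_add_one_eq_two]
  have add_three (i : ι) : i + 2 + 1 = i + 3 := by rw [add_assoc, two_add_one_eq_three]
  have sub_two (i : ι) : i - 1 - 1 = i - 2 := by rw [sub_sub, one_add_one_eq_two]
  have sub_three (i : ι) : i - 2 - 1 = i - 3 := by rw [sub_sub, two_add_one_eq_three]
  have add_two_sub_one : j + 2 - 1 = j + 1 := by rw [← add_two, add_sub_cancel_right]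
  have sub_two_add_one : j - 2 + 1 = j - 1 := by rw [← sub_two, sub_add_cancel]
  have c_add_two : c (j + 2) = c (j - 1) := by
    rw [← hc (j - 1), ← add_three, ← add_two (j - 1), sub_add_cancel, add_two]
  have c_sub_two : c (j - 2) = c (j + 1) := by
    rw [← hc (j - 2), ← add_three, ← add_two (j - 2), sub_two_add_one, sub_add_cancel]
  have c_sub_three : c (j - 3) = c j := by rw [← hc (j - 3), sub_add_cancel]
  have hcc_j : c j * c (j + 1) + c (j + 1) * c (j - 1) + c (j - 1) * c j = κ := by
    simpa only [c_add_two] using hcc j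
  have hs_sub_two : s (j - 2) ^ 2 = κ + c (j + 1) ^ 2 := by simpa only [c_sub_two] using hs (j - 2)
  simp only [Function.iterate_succ, Function.iterate_zero, Function.comp_apply, id_eq, evoluteOp,
    add_sub_cancel_right, sub_add_cancel, add_two, add_three, sub_two, sub_three, add_two_sub_one,
    sub_two_add_one, c_add_two, c_sub_two, c_sub_three]
  -- The coefficients of `v (j + 1)`, `v (j - 1)` and `v j`; those of `v (j ± 2)` vanish because the
  -- three diagonal entries `c (i - 1) - c i` in a period add up to zero.
  linear_combination
    -s j * v (j + 1) * (hs (j - 1) + hs j + hs (j + 1) + hcc_j)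
      + s (j - 1) * v (j - 1) * (hs_sub_two + hs (j - 1) + hs j + hcc_j)
      - (2 * c (j - 1) - c j - c (j + 1)) * v j * hs j
      - (c (j - 1) - 2 * c j + c (j + 1)) * v j * hs (j - 1)
      - (c (j - 1) - c j) * v j * hcc_j

theorem evoluteOp_iterate_three_of_six_eq_zero {c s : ι → R} {κ : R} (h6 : (6 : ι) = 0)
    (hc : ∀ j, c (j + 3) = c j) (hs : ∀ j, s j ^ 2 = κ + c j ^ 2)
    (hcc : ∀ j, c j * c (j + 1) + c (j + 1) * c (j + 2) + c (j + 2) * c j = κ)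
    (hprod : ∀ j, s (j + 3) * s (j + 4) * s (j + 5) = s j * s (j + 1) * s (j + 2)) (v : ι → R) :
    (evoluteOp c s)^[3] v = -(4 * κ) • evoluteOp c s v := by
  ext j
  have sub_eq_add {a b : ι} (hab : a + b = 6) : j - a = j + b := by
    rw [sub_eq_iff_eq_add, add_assoc, add_comm b, hab, h6, add_zero]
  have sub_three : j - 3 = j + 3 := sub_eq_add (by norm_num)
  have sub_two : j - 2 = j + 4 := sub_eq_add (by norm_num)
  have sub_one : j - 1 = j + 5 := sub_eq_add (by norm_num)
  rw [evoluteOp_iterate_three hc hs hcc, Pi.smul_apply, smul_eq_mul, sub_three, sub_two, sub_one]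
  linear_combination -v (j + 3) * hprod j

end EvoluteOp

section Trigonometry

theorem cot_mul_cot_add_eq_one {x y z : ℝ} (hx : sin x ≠ 0) (hy : sin y ≠ 0) (hz : sin z ≠ 0)
    (h : sin (x + y + z) = 0) : cot x * cot y + cot y * cot z + cot z * cot x = 1 := by
  simp only [sin_add, cos_add] at h
  simp only [cot_eq_cos_div_sin]
  field_simp
  linear_combination h

theorem inv_sin_sq_eq_one_add_cot_sq {x : ℝ} (hx : sin x ≠ 0) : (sin x)⁻¹ ^ 2 = 1 + cot x ^ 2 := by
  rw [cot_eq_cos_div_sin]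
  field_simp
  exact (sin_sq_add_cos_sq x).symm

theorem sin_add_sub_of_sin_eq_zero {x a b : ℝ} (ha : sin a = 0) (hb : sin b = 0) :
    sin (x + (b - a)) = cos a * cos b * sin x := by
  rw [sin_add, sin_sub, cos_sub, ha, hb]
  ring

theorem cos_add_sub_of_sin_eq_zero {x a b : ℝ} (ha : sin a = 0) (hb : sin b = 0) :
    cos (x + (b - a)) = cos a * cos b * cos x := by
  rw [cos_add, sin_sub, cos_sub, ha, hb]
  ring

end Trigonometry

section Polygon

variable {n : ℕ} [NeZero n] {α : Fin n → ℝ}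

/-- The angle `θ_{j+1/2}` between the consecutive sides `j` and `j + 1`. -/
def turningAngle (α : Fin n → ℝ) (j : Fin n) : ℝ := α (j + 1) - α j

/-- The cotangent of `θ_{j+1/2}`, halved so that its differences form the diagonal of `P_θ`. -/
noncomputable def halfCot (α : Fin n → ℝ) (j : Fin n) : ℝ := cot (turningAngle α j) / 2

/-- The cosecant of `θ_{j+1/2}`, halved so that it is the entry `(j, j + 1)` of `P_θ`. -/
noncomputable def halfCsc (α : Fin n → ℝ) (j : Fin n) : ℝ := (sin (turningAngle α j))⁻¹ / 2

theorem Pmat_mulVec (hn : 3 ≤ n) (α v : Fin n → ℝ) :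
    Pmat n α *ᵥ v = evoluteOp (halfCot α) (halfCsc α) v := by
  ext j
  have one_ne_zero : (1 : Fin n) ≠ 0 := by
    rw [Ne, Fin.one_eq_zero_iff]
    omega
  have two_ne_zero : (2 : Fin n) ≠ 0 := by
    simp [Fin.ext_iff, Nat.mod_eq_of_lt (show 2 < n from hn)]
  have next_ne : j + 1 ≠ j := fun h => one_ne_zero (by linear_combination h)
  have prev_ne : j - 1 ≠ j := fun h => one_ne_zero (by linear_combination -h)
  have prev_ne_next : j - 1 ≠ j + 1 := fun h => two_ne_zero (by linear_combination -h)
  have row (k : Fin n) : Pmat n α j k =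
      (if k = j then halfCot α (j - 1) - halfCot α j else 0) +
        (if k = j + 1 then halfCsc α j else 0) -
        (if k = j - 1 then halfCsc α (j - 1) else 0) := by
    simp only [Pmat, Matrix.of_apply, halfCot, halfCsc, turningAngle, cot_eq_cos_div_sin,
      sub_add_cancel]
    rcases eq_or_ne k j with rfl | hk
    · simp only [↓reduceIte, next_ne.symm, prev_ne.symm]
      ring
    rcases eq_or_ne k (j + 1) with rfl | hk_next
    · simp only [↓reduceIte, next_ne, prev_ne_next.symm]
      ring
    · simp only [hk, hk_next, ↓reduceIte]
      split_ifs <;> ring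
  simp [Matrix.mulVec, dotProduct, row, evoluteOp, add_mul, sub_mul, Finset.sum_add_distrib]

theorem three_le_of_sin_turningAngle_ne_zero (hsin : ∀ j, sin (turningAngle α j) ≠ 0)
    (hpar : ∀ j, sin (α (j + 3) - α j) = 0) : 3 ≤ n := by
  by_contra! hn
  have := NeZero.pos n
  interval_cases n
  · exact hsin 0 (hpar 0)
  · exact hsin 0 (hpar 0)

theorem turningAngle_add_turningAngle_add_turningAngle (α : Fin n → ℝ) (j : Fin n) :
    turningAngle α j + turningAngle α (j + 1) + turningAngle α (j + 2) = α (j + 3) - α j := by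
  simp only [turningAngle, add_assoc, one_add_one_eq_two, two_add_one_eq_three]
  ring

theorem turningAngle_add_three (α : Fin n → ℝ) (j : Fin n) :
    turningAngle α (j + 3) =
      turningAngle α j + ((α (j + 1 + 3) - α (j + 1)) - (α (j + 3) - α j)) := by
  rw [turningAngle, turningAngle, add_right_comm j 3 1]
  ring

theorem sin_turningAngle_add_three (hpar : ∀ j, sin (α (j + 3) - α j) = 0) (j : Fin n) :
    sin (turningAngle α (j + 3)) =
      cos (α (j + 3) - α j) * cos (α (j + 1 + 3) - α (j + 1)) * sin (turningAngle α j) := by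
  rw [turningAngle_add_three, sin_add_sub_of_sin_eq_zero (hpar j) (hpar (j + 1))]

theorem cos_sq_opposite_sub (hpar : ∀ j, sin (α (j + 3) - α j) = 0) (j : Fin n) :
    cos (α (j + 3) - α j) ^ 2 = 1 := by
  rw [cos_sq', hpar, zero_pow two_ne_zero, sub_zero]

theorem halfCot_add_three (hpar : ∀ j, sin (α (j + 3) - α j) = 0) (j : Fin n) :
    halfCot α (j + 3) = halfCot α j := by
  have cos_ne_zero (i : Fin n) : cos (α (i + 3) - α i) ≠ 0 := fun h => by
    simpa [h] using cos_sq_opposite_sub hpar i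
  rw [halfCot, halfCot, cot_eq_cos_div_sin, cot_eq_cos_div_sin, sin_turningAngle_add_three hpar,
    turningAngle_add_three, cos_add_sub_of_sin_eq_zero (hpar j) (hpar (j + 1)),
    mul_div_mul_left _ _ (mul_ne_zero (cos_ne_zero j) (cos_ne_zero (j + 1)))]

theorem prod_sin_turningAngle_add_three (h6 : (6 : Fin n) = 0)
    (hpar : ∀ j, sin (α (j + 3) - α j) = 0) (j : Fin n) :
    sin (turningAngle α (j + 3)) * sin (turningAngle α (j + 4)) * sin (turningAngle α (j + 5)) =
      sin (turningAngle α j) * sin (turningAngle α (j + 1)) * sin (turningAngle α (j + 2)) := by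
  have add_one_add_one : j + 1 + 1 = j + 2 := by ring
  have add_two_add_one : j + 2 + 1 = j + 3 := by ring
  have add_four : j + 4 = j + 1 + 3 := by ring
  have add_five : j + 5 = j + 2 + 3 := by ring
  have add_three_add_three : j + 3 + 3 = j := by linear_combination h6
  have opposite_sign : cos (α (j + 3 + 3) - α (j + 3)) = cos (α (j + 3) - α j) := by
    rw [add_three_add_three, ← cos_neg, neg_sub]
  simp only [add_four, add_five, sin_turningAngle_add_three hpar, add_one_add_one,
    add_two_add_one, opposite_sign]
  set ε : Fin n → ℝ := fun i => cos (α (i + 3) - α i)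
  set t : Fin n → ℝ := fun i => sin (turningAngle α i)
  have ε_sq (i : Fin n) : ε i ^ 2 = 1 := cos_sq_opposite_sub hpar i
  calc ε j * ε (j + 1) * t j * (ε (j + 1) * ε (j + 2) * t (j + 1)) *
        (ε (j + 2) * ε j * t (j + 2))
      = ε j ^ 2 * ε (j + 1) ^ 2 * ε (j + 2) ^ 2 * (t j * t (j + 1) * t (j + 2)) := by ring
    _ = t j * t (j + 1) * t (j + 2) := by simp only [ε_sq, one_mul]

theorem prod_halfCsc_add_three (h6 : (6 : Fin n) = 0) (hpar : ∀ j, sin (α (j + 3) - α j) = 0)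
    (j : Fin n) :
    halfCsc α (j + 3) * halfCsc α (j + 4) * halfCsc α (j + 5) =
      halfCsc α j * halfCsc α (j + 1) * halfCsc α (j + 2) := by
  simp only [halfCsc, div_mul_div_comm, ← mul_inv, prod_sin_turningAngle_add_three h6 hpar j]

theorem halfCsc_sq (hsin : ∀ j, sin (turningAngle α j) ≠ 0) (j : Fin n) :
    halfCsc α j ^ 2 = 1 / 4 + halfCot α j ^ 2 := by
  rw [halfCsc, halfCot]
  linear_combination inv_sin_sq_eq_one_add_cot_sq (hsin j) / 4

theorem halfCot_mul_halfCot_add (hsin : ∀ j, sin (turningAngle α j) ≠ 0)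
    (hpar : ∀ j, sin (α (j + 3) - α j) = 0) (j : Fin n) :
    halfCot α j * halfCot α (j + 1) + halfCot α (j + 1) * halfCot α (j + 2) +
      halfCot α (j + 2) * halfCot α j = 1 / 4 := by
  have sin_sum :
      sin (turningAngle α j + turningAngle α (j + 1) + turningAngle α (j + 2)) = 0 := by
    rw [turningAngle_add_turningAngle_add_turningAngle, hpar]
  simp only [halfCot]
  linear_combination cot_mul_cot_add_eq_one (hsin j) (hsin (j + 1)) (hsin (j + 2)) sin_sum / 4

end Polygon

theorem stmt_14_general {n : ℕ} [NeZero n] (hn : n ∣ 6) (α : Fin n → ℝ)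
    (hsin : ∀ j, sin (α (j + 1) - α j) ≠ 0)
    (hpar : ∀ j, ∃ k : ℤ, α (j + 3) - α j = k * π) :
    Pmat n α ^ 3 = -Pmat n α := by
  have six_eq_zero : (6 : Fin n) = 0 := Fin.ext (Nat.mod_eq_zero_of_dvd hn)
  have sin_opposite (j : Fin n) : sin (α (j + 3) - α j) = 0 :=
    sin_eq_zero_iff.mpr ((hpar j).imp fun _ hk => hk.symm)
  have mulVec_eq := Pmat_mulVec (three_le_of_sin_turningAngle_ne_zero hsin sin_opposite) α
  refine Matrix.ext_iff_mulVec.mpr fun v => ?_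
  calc Pmat n α ^ 3 *ᵥ v
      = (evoluteOp (halfCot α) (halfCsc α))^[3] v := by
        simp only [pow_three, ← Matrix.mulVec_mulVec, mulVec_eq, Function.iterate_succ,
          Function.iterate_zero, Function.comp_apply, id_eq]
    _ = -(4 * (1 / 4 : ℝ)) • evoluteOp (halfCot α) (halfCsc α) v :=
        evoluteOp_iterate_three_of_six_eq_zero six_eq_zero (halfCot_add_three sin_opposite)
          (halfCsc_sq hsin) (halfCot_mul_halfCot_add hsin sin_opposite)
          (prod_halfCsc_add_three six_eq_zero sin_opposite) v
    _ = -Pmat n α *ᵥ v := by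
        rw [Matrix.neg_mulVec, mulVec_eq]
        norm_num

/-- For a hexagon with parallel opposite sides
(`α_{j+3} − α_j ∈ πℤ`), the perpendicular-bisector evolute matrix satisfies
`P_θ³ = −P_θ`: the third P-evolute coincides with the first one, i.e. the first
and second P-evolutes are each other's evolutes. -/
theorem stmt_14 (α : Fin 6 → ℝ)
    (hsin : ∀ j : Fin 6, Real.sin (α (j + 1) - α j) ≠ 0)
    (hpar : ∀ j : Fin 6, ∃ k : ℤ, α (j + 3) - α j = k * Real.pi) :
    (Pmat 6 α) ^ 3 = -(Pmat 6 α) :=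
  stmt_14_general dvd_rfl α hsin hpar
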